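/- With Σ a complete simplicial rational fan and λ: |Σ| → ℝ piecewise ℚ-linear with λ(b_i) > −1 for all i, the weighted δ-vector δ^λ(t) := (1−t)^{d+1}(1 + Σ_{m≥1} Σ_{v ∈ mQ ∩ N} t^{ψ(v) − ⌈ψ(v)⌉ + λ(v) + m}) is a rational function in ℚ(t^{1/N}) for some positive integer N and satisfies the symmetry δ^λ(t) = t^d δ^λ(t^{-1}). -/

import Mathlib

open scoped Classical

/-- The cone spanned by the rays indexed by `σ`. -/
def coneOf (d r : ℕ) (v : Fin r → Fin d → ℤ) (σ : Finset (Fin r)) : Set (Fin d → ℝ) :=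
  {x | ∃ c : Fin r → ℝ, (∀ i, 0 ≤ c i) ∧ (∀ i ∉ σ, c i = 0) ∧
    ∀ j, x j = ∑ i, c i * (v i j : ℝ)}

/-- The monomial `t^e` with rational exponent, as a Hahn series. -/
noncomputable def tpow (e : ℚ) : HahnSeries ℚ ℚ := HahnSeries.single e 1

/-- Build a Hahn series from a coefficient function (junk value `0` if not well-founded). -/

noncomputable def mkHahn (c : ℚ → ℚ) : HahnSeries ℚ ℚ :=
  if h : (Function.support c).IsPWO then ⟨c, h⟩ else 0

/-- The coefficient function of the series `1 + ∑_{m ≥ 1} ∑_{v ∈ mQ ∩ N}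
t^{ψ(v) - ⌈ψ(v)⌉ + λ(v) + m}` defining the weighted δ-vector. -/
noncomputable def deltaCoeff (d r : ℕ) (v : Fin r → Fin d → ℤ)
    (cones : Finset (Finset (Fin r))) (ψ lam : (Fin d → ℝ) → ℝ) : ℚ → ℚ := fun e =>
  (if e = 0 then 1 else 0) +
  (Set.ncard {p : ℕ × (Fin d → ℤ) |
    1 ≤ p.1 ∧ (∃ σ ∈ cones, (fun j => (p.2 j : ℝ)) ∈ coneOf d r v σ) ∧
    ψ (fun j => (p.2 j : ℝ)) ≤ (p.1 : ℝ) ∧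
    ψ (fun j => (p.2 j : ℝ)) - ⌈ψ (fun j => (p.2 j : ℝ))⌉
      + lam (fun j => (p.2 j : ℝ)) + (p.1 : ℝ) = (e : ℝ)} : ℚ)

/-- A polynomial in `t^{1/N}`, as a Hahn series. -/
noncomputable def polyToHahn (N : ℕ) (p : Polynomial ℚ) : HahnSeries ℚ ℚ :=
  ∑ k ∈ Finset.range (p.natDegree + 1), HahnSeries.single ((k : ℚ) / N) (p.coeff k)


noncomputable def gf {α : Type*} (g : α → ℕ) : PowerSeries ℚ :=
  PowerSeries.mk fun n => (Nat.card {a // g a = n} : ℚ)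

def FinFib {α : Type*} (g : α → ℕ) : Prop := ∀ n, Finite {a // g a = n}

theorem gf_equiv {α β : Type*} (e : α ≃ β) (g : α → ℕ) (h : β → ℕ) (H : ∀ a, g a = h (e a)) :
    gf g = gf h := by
  ext n
  simp only [gf, PowerSeries.coeff_mk]
  congr 1
  exact Nat.card_congr (e.subtypeEquiv (fun a => by rw [H]))

theorem finFib_equiv {α β : Type*} (e : α ≃ β) (g : α → ℕ) (h : β → ℕ) (H : ∀ a, g a = h (e a))
    (hg : FinFib g) : FinFib h := by
  intro n
  have := hg n
  exact Finite.of_equiv _ (e.subtypeEquiv (p := fun a => g a = n) (q := fun b => h b = n) (fun a => by rw [H]))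

def prodFib {α β : Type*} (g : α → ℕ) (h : β → ℕ) (n : ℕ) :
    {p : α × β // g p.1 + h p.2 = n} ≃
      Σ x : {x // x ∈ Finset.HasAntidiagonal.antidiagonal n}, {a // g a = x.1.1} × {b // h b = x.1.2} where
  toFun p := ⟨⟨(g p.1.1, h p.1.2), by simpa using p.2⟩, ⟨p.1.1, rfl⟩, ⟨p.1.2, rfl⟩⟩
  invFun y := ⟨(y.2.1.1, y.2.2.1), by
    rw [y.2.1.2, y.2.2.2]; exact Finset.HasAntidiagonal.mem_antidiagonal.1 y.1.2⟩
  left_inv p := rfl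
  right_inv := by
    rintro ⟨⟨⟨i, j⟩, hx⟩, ⟨a, ha⟩, ⟨b, hb⟩⟩
    change g a = i at ha
    change h b = j at hb
    cases ha
    cases hb
    rfl

theorem finFib_prod {α β : Type*} (g : α → ℕ) (h : β → ℕ) (hg : FinFib g) (hh : FinFib h) :
    FinFib (fun p : α × β => g p.1 + h p.2) := by
  intro n
  have := hg; have := hh
  unfold FinFib at *
  exact Finite.of_equiv _ (prodFib g h n).symm

theorem gf_prod {α β : Type*} (g : α → ℕ) (h : β → ℕ) (hg : FinFib g) (hh : FinFib h) :
    gf (fun p : α × β => g p.1 + h p.2) = gf g * gf h := by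
  ext n
  rw [PowerSeries.coeff_mul]
  simp only [gf, PowerSeries.coeff_mk]
  unfold FinFib at *
  rw [Nat.card_congr (prodFib g h n), Nat.card_sigma, Nat.cast_sum,
    ← Finset.sum_coe_sort (Finset.HasAntidiagonal.antidiagonal n)]
  simp [Nat.card_prod]

def sigmaFib {ι : Type*} {α : ι → Type*} (g : ∀ i, α i → ℕ) (n : ℕ) :
    {p : Σ i, α i // g p.1 p.2 = n} ≃ Σ i, {a : α i // g i a = n} where
  toFun p := ⟨p.1.1, p.1.2, p.2⟩
  invFun y := ⟨⟨y.1, y.2.1⟩, y.2.2⟩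
  left_inv p := rfl
  right_inv y := rfl

theorem finFib_sigma {ι : Type*} [Fintype ι] {α : ι → Type*} (g : ∀ i, α i → ℕ)
    (hg : ∀ i, FinFib (g i)) : FinFib (fun p : Σ i, α i => g p.1 p.2) := by
  intro n
  unfold FinFib at *
  exact Finite.of_equiv _ (sigmaFib g n).symm

theorem gf_sigma {ι : Type*} [Fintype ι] {α : ι → Type*} (g : ∀ i, α i → ℕ)
    (hg : ∀ i, FinFib (g i)) : gf (fun p : Σ i, α i => g p.1 p.2) = ∑ i, gf (g i) := by
  ext n
  unfold FinFib at *
  rw [map_sum]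
  simp only [gf, PowerSeries.coeff_mk]
  rw [Nat.card_congr (sigmaFib g n), Nat.card_sigma, Nat.cast_sum]

theorem finFib_fintype {α : Type*} [Fintype α] (g : α → ℕ) : FinFib g := fun _ => inferInstance

theorem gf_fintype {α : Type*} [Fintype α] (g : α → ℕ) :
    gf g = ∑ a, (PowerSeries.X : PowerSeries ℚ) ^ g a := by
  ext n
  rw [map_sum]
  simp only [gf, PowerSeries.coeff_mk, PowerSeries.coeff_X_pow, Nat.card_eq_fintype_card,
    Fintype.card_subtype, Finset.sum_boole]
  congr 2
  ext; simp [eq_comm]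

theorem finFib_mul (k : ℕ) (hk : 0 < k) : FinFib (fun n : ℕ => n * k) := by
  intro n
  have : Subsingleton {a : ℕ // a * k = n} :=
    ⟨fun a b => Subtype.ext (Nat.eq_of_mul_eq_mul_right hk (a.2.trans b.2.symm))⟩
  infer_instance

theorem gf_mul (k : ℕ) (hk : 0 < k) :
    gf (fun n : ℕ => n * k) * (1 - PowerSeries.X ^ k) = 1 := by
  have h2 : gf (fun n : ℕ => n * k) = 1 + gf (fun n : ℕ => n * k) * PowerSeries.X ^ k := by
    have e : ℕ ≃ (Unit ⊕ ℕ) := Equiv.natSumPUnitEquivNat.symm.trans (Equiv.sumComm _ _)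
    ext n
    rw [map_add, PowerSeries.coeff_mul_X_pow']
    simp only [gf, PowerSeries.coeff_mk, PowerSeries.coeff_one]
    have key : ∀ m, Nat.card {a : ℕ // a * k = m} = if k ∣ m then 1 else 0 := by
      intro m
      split_ifs with h
      · obtain ⟨c, rfl⟩ := h
        rw [Nat.card_eq_one_iff_unique]
        refine ⟨⟨fun a b => Subtype.ext (Nat.eq_of_mul_eq_mul_right hk (a.2.trans b.2.symm))⟩,
          ⟨⟨c, mul_comm _ _⟩⟩⟩
      · rw [Nat.card_eq_zero]
        left
        exact ⟨fun a => h ⟨a.1, by rw [mul_comm]; exact a.2.symm⟩⟩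
    rw [key, key]
    by_cases hn : k ≤ n
    · have : k ∣ n - k ↔ k ∣ n := by
        constructor
        · intro h; have := Nat.dvd_add h (dvd_refl k); rwa [Nat.sub_add_cancel hn] at this
        · intro h; exact Nat.dvd_sub h (dvd_refl k)
      have hn0 : n ≠ 0 := by omega
      simp [hn, hn0, this]
    · by_cases hn0 : n = 0
      · subst hn0; simp [hk.ne']
      · have : ¬ k ∣ n := fun h => hn (Nat.le_of_dvd (by omega) h)
        simp [hn, hn0, this]
  rw [mul_sub, mul_one, sub_eq_iff_eq_add]
  exact h2

theorem gf_pi {ι : Type*} [Fintype ι] (k : ι → ℕ) (hk : ∀ i, 0 < k i) :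
    FinFib (fun n : ι → ℕ => ∑ i, n i * k i) ∧
    gf (fun n : ι → ℕ => ∑ i, n i * k i) * ∏ i, (1 - PowerSeries.X ^ k i) = 1 := by
  revert k
  refine Fintype.induction_empty_option (P := fun ι _ => ∀ k : ι → ℕ, (∀ i, 0 < k i) → 
    FinFib (fun n : ι → ℕ => ∑ i, n i * k i) ∧
    gf (fun n : ι → ℕ => ∑ i, n i * k i) * ∏ i, (1 - PowerSeries.X ^ k i) = 1) ?_ ?_ ?_ ι
  · intro α β _ e ih k hk
    let _ := Fintype.ofEquiv β e.symm
    have ih := ih (k ∘ e) (fun i => hk _)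
    have H : ∀ a : α → ℕ, ∑ i, a i * (k ∘ e) i = ∑ i, (e.arrowCongr (Equiv.refl ℕ) a) i * k i := by
      intro a
      rw [← Equiv.sum_comp e]
      simp
    refine ⟨finFib_equiv (e.arrowCongr (Equiv.refl ℕ)) _ _ H ih.1, ?_⟩
    rw [← gf_equiv (e.arrowCongr (Equiv.refl ℕ)) _ _ H, ← Equiv.prod_comp e]
    exact ih.2
  · intro k hk
    refine ⟨finFib_fintype _, ?_⟩
    rw [gf_fintype]
    simp
  · intro α _ ih k hk
    have ih := ih (fun i => k (some i)) (fun i => hk _)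
    let e : ℕ × (α → ℕ) ≃ (Option α → ℕ) := (Equiv.piOptionEquivProd (β := fun _ => ℕ)).symm
    have H : ∀ a : ℕ × (α → ℕ), a.1 * k none + ∑ i, a.2 i * k (some i) = ∑ i, (e a) i * k i := by
      intro a
      rw [Fintype.sum_option]
      rfl
    refine ⟨finFib_equiv e _ _ H (finFib_prod _ _ (finFib_mul _ (hk _)) ih.1), ?_⟩
    rw [← gf_equiv e _ _ H, gf_prod (fun n : ℕ => n * k none) _ (finFib_mul _ (hk _)) ih.1,
      Fintype.prod_option]
    calc _ = (gf (fun n : ℕ => n * k none) * (1 - PowerSeries.X ^ k none)) *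
        (gf (fun n : α → ℕ => ∑ i, n i * k (some i)) * ∏ i, (1 - PowerSeries.X ^ k (some i))) := by
          ring
      _ = 1 := by rw [ih.2, gf_mul _ (hk _), one_mul]

section box
variable {d : ℕ} {ι : Type*} [Fintype ι]

def castv (w : Fin d → ℤ) : Fin d → ℝ := fun j => (w j : ℝ)

theorem castv_add (x y : Fin d → ℤ) : castv (x + y) = castv x + castv y := by
  ext j; simp [castv]

theorem castv_sub (x y : Fin d → ℤ) : castv (x - y) = castv x - castv y := by
  ext j; simp [castv]

theorem castv_sum {ι : Type*} [Fintype ι] (u : ι → Fin d → ℤ) (n : ι → ℤ) :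
    castv (∑ i, n i • u i) = ∑ i, (n i : ℝ) • castv (u i) := by
  ext j; simp [castv, Finset.sum_apply]

def InBox (B : Module.Basis ι ℝ (Fin d → ℝ)) (P : ι → Prop) (x : Fin d → ℤ) : Prop :=
  ∀ i, (P i → 0 ≤ B.repr (castv x) i ∧ B.repr (castv x) i < 1) ∧
    (¬ P i → 0 < B.repr (castv x) i ∧ B.repr (castv x) i ≤ 1)

def InH (B : Module.Basis ι ℝ (Fin d → ℝ)) (P : ι → Prop) (x : Fin d → ℤ) : Prop :=
  ∀ i, (P i → 0 ≤ B.repr (castv x) i) ∧ (¬ P i → 0 < B.repr (castv x) i)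

theorem repr_castv_sum (B : Module.Basis ι ℝ (Fin d → ℝ)) (u : ι → Fin d → ℤ)
    (hB : ∀ i, B i = castv (u i)) (n : ι → ℤ) (i : ι) :
    B.repr (castv (∑ i, n i • u i)) i = n i := by
  rw [castv_sum]
  simp_rw [← hB]
  rw [B.repr_sum_self]

theorem castv_injective : Function.Injective (castv (d := d)) := by
  intro x y h
  ext j
  have := congrFun h j
  simpa [castv] using this

theorem box_finite (B : Module.Basis ι ℝ (Fin d → ℝ)) (u : ι → Fin d → ℤ)
    (hB : ∀ i, B i = castv (u i)) (P : ι → Prop) : {x | InBox B P x}.Finite := by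
  apply (Set.finite_Icc (fun j => - ∑ i, |u i j|) (fun j => ∑ i, |u i j|)).subset
  intro x hx
  have key : ∀ j, |x j| ≤ ∑ i, |u i j| := by
    intro j
    have h1 : (x j : ℝ) = ∑ i, B.repr (castv x) i * (u i j : ℝ) := by
      have := congrFun (B.sum_repr (castv x)) j
      simp only [hB, Finset.sum_apply, Pi.smul_apply, smul_eq_mul] at this
      exact this.symm
    have h2 : |(x j : ℝ)| ≤ ∑ i, |(u i j : ℝ)| := by
      rw [h1]
      refine (Finset.abs_sum_le_sum_abs _ _).trans (Finset.sum_le_sum fun i _ => ?_)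
      rw [abs_mul]
      have : |B.repr (castv x) i| ≤ 1 := by
        rw [abs_le]
        by_cases hP : P i
        · have := (hx i).1 hP; constructor <;> linarith
        · have := (hx i).2 hP; constructor <;> linarith
      exact mul_le_of_le_one_left (abs_nonneg _) this
    exact_mod_cast h2
  rw [Set.mem_Icc]
  exact ⟨fun j => (abs_le.1 (key j)).1, fun j => (abs_le.1 (key j)).2⟩

theorem box_compl (B : Module.Basis ι ℝ (Fin d → ℝ)) (u : ι → Fin d → ℤ)
    (hB : ∀ i, B i = castv (u i)) (P Q : ι → Prop) (hPQ : ∀ i, Q i ↔ ¬ P i) (x : Fin d → ℤ)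
    (hx : InBox B P x) : InBox B Q (∑ i, u i - x) := by
  have : ∀ i, B.repr (castv (∑ i, u i - x)) i = 1 - B.repr (castv x) i := by
    intro i
    have h := repr_castv_sum B u hB (fun _ => 1) i
    simp only [one_smul, Int.cast_one] at h
    rw [castv_sub, map_sub, Finsupp.sub_apply, h]
  intro i
  rw [this, hPQ]
  by_cases hP : P i
  · have := (hx i).1 hP
    exact ⟨fun h => absurd hP h, fun _ => ⟨by linarith, by linarith⟩⟩
  · have := (hx i).2 hP
    exact ⟨fun _ => ⟨by linarith, by linarith⟩, fun h => absurd hP h⟩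

theorem box_decomp (B : Module.Basis ι ℝ (Fin d → ℝ)) (u : ι → Fin d → ℤ)
    (hB : ∀ i, B i = castv (u i)) (P : ι → Prop) :
    ∃ e : ({x // InBox B P x} × (ι → ℕ)) ≃ {w // InH B P w},
      ∀ p, (e p).1 = p.1.1 + ∑ i, (p.2 i : ℤ) • u i := by
  have hr : ∀ (x : Fin d → ℤ) (n : ι → ℤ) i,
      B.repr (castv (x + ∑ i, n i • u i)) i = B.repr (castv x) i + n i := by
    intro x n i
    rw [castv_add, map_add, Finsupp.add_apply, repr_castv_sum B u hB]
  let f : ({x // InBox B P x} × (ι → ℕ)) → {w // InH B P w} := fun p =>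
    ⟨p.1.1 + ∑ i, (p.2 i : ℤ) • u i, by
      intro i
      rw [hr p.1.1 (fun i => (p.2 i : ℤ))]
      have h0 : (0 : ℝ) ≤ ((p.2 i : ℤ) : ℝ) := by positivity
      refine ⟨fun hP => ?_, fun hP => ?_⟩
      · have := (p.1.2 i).1 hP; linarith
      · have := (p.1.2 i).2 hP; linarith⟩
  have hf : Function.Bijective f := by
    constructor
    · rintro ⟨⟨x, hx⟩, n⟩ ⟨⟨y, hy⟩, m⟩ h
      have h1 : x + ∑ i, (n i : ℤ) • u i = y + ∑ i, (m i : ℤ) • u i := congrArg Subtype.val h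
      have hnm : n = m := by
        ext i
        have h2 := congrArg (fun z => B.repr (castv z) i) h1
        rw [hr x (fun i => (n i : ℤ)), hr y (fun i => (m i : ℤ))] at h2
        have h3 : |((n i : ℤ) : ℝ) - ((m i : ℤ) : ℝ)| < 1 := by
          rw [abs_lt]
          by_cases hP : P i
          · have := (hx i).1 hP; have := (hy i).1 hP; constructor <;> linarith
          · have := (hx i).2 hP; have := (hy i).2 hP; constructor <;> linarith
        have h4 : |(n i : ℤ) - (m i : ℤ)| < 1 := by exact_mod_cast h3
        have := Int.abs_lt_one_iff.1 h4
        omega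
      subst hnm
      have : x = y := by simpa using h1
      subst this
      rfl
    · rintro ⟨w, hw⟩
      let c : ι → ℝ := fun i => B.repr (castv w) i
      have hn : ∀ i, ∃ n : ℕ, (P i → 0 ≤ c i - n ∧ c i - n < 1) ∧
          (¬ P i → 0 < c i - n ∧ c i - n ≤ 1) := by
        intro i
        by_cases hP : P i
        · refine ⟨⌊c i⌋₊, fun _ => ?_, fun h => absurd hP h⟩
          have h0 := (hw i).1 hP
          have h1 := Nat.floor_le h0
          have h2 := Nat.lt_floor_add_one (c i)
          constructor <;> linarith
        · have h0 : 0 < c i := (hw i).2 hP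
          refine ⟨⌈c i⌉₊ - 1, fun h => absurd h hP, fun _ => ?_⟩
          have h1 := Nat.le_ceil (c i)
          have h2 := Nat.ceil_lt_add_one h0.le
          have h3 : 1 ≤ ⌈c i⌉₊ := Nat.ceil_pos.2 h0
          rw [Nat.cast_sub h3, Nat.cast_one]
          constructor <;> linarith
      choose n hn using hn
      have hrep : ∀ i, B.repr (castv (w + ∑ i, (-(n i : ℤ)) • u i)) i = c i - n i := by
        intro i
        rw [hr w (fun i => -(n i : ℤ))]
        simp [c, sub_eq_add_neg]
      refine ⟨⟨⟨w + ∑ i, (-(n i : ℤ)) • u i, ?_⟩, n⟩, ?_⟩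
      · intro i
        rw [hrep]
        exact hn i
      · apply Subtype.ext
        simp [f]
  exact ⟨Equiv.ofBijective f hf, fun p => rfl⟩

theorem cone_gf (B : Module.Basis ι ℝ (Fin d → ℝ)) (u : ι → Fin d → ℤ)
    (hB : ∀ i, B i = castv (u i)) (P : ι → Prop) (K : (Fin d → ℤ) → ℕ)
    (L : (Fin d → ℝ) →ₗ[ℝ] ℝ)
    (hK : ∀ w, (∀ i, 0 ≤ B.repr (castv w) i) → (K w : ℝ) = L (castv w))
    (hu : ∀ i, 0 < K (u i)) (S : Finset (Fin d → ℤ)) (hS : ∀ x, x ∈ S ↔ InBox B P x) :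
    FinFib (fun w : {w // InH B P w} => K w.1) ∧
    gf (fun w : {w // InH B P w} => K w.1) * ∏ i, (1 - PowerSeries.X ^ K (u i)) =
      ∑ x ∈ S, PowerSeries.X ^ K x := by
  obtain ⟨e, he⟩ := box_decomp B u hB P
  have hH : ∀ w, InH B P w → ∀ i, 0 ≤ B.repr (castv w) i := by
    intro w hw i
    by_cases hP : P i
    · exact (hw i).1 hP
    · exact ((hw i).2 hP).le
  have hBx : ∀ w, InBox B P w → ∀ i, 0 ≤ B.repr (castv w) i := by
    intro w hw i
    by_cases hP : P i
    · exact ((hw i).1 hP).1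
    · exact ((hw i).2 hP).1.le
  have hKu : ∀ i, (K (u i) : ℝ) = L (castv (u i)) := by
    intro i
    apply hK
    intro j
    rw [← hB, B.repr_self, Finsupp.single_apply]
    split_ifs <;> norm_num
  have H : ∀ p : {x // InBox B P x} × (ι → ℕ),
      K p.1.1 + ∑ i, p.2 i * K (u i) = K (e p).1 := by
    intro p
    have h1 := hK _ (hH _ (e p).2)
    have h2 := hK _ (hBx _ p.1.2)
    rw [he, castv_add, castv_sum u (fun i => (p.2 i : ℤ)), map_add, map_sum] at h1
    rw [← he] at h1
    simp only [map_smul, ← hKu, ← h2, smul_eq_mul] at h1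
    have : ((K p.1.1 + ∑ i, p.2 i * K (u i) : ℕ) : ℝ) = (K (e p).1 : ℝ) := by
      rw [h1]; push_cast; rfl
    exact_mod_cast this
  let _ : Fintype {x // InBox B P x} := (box_finite B u hB P).fintype
  have hpi := gf_pi (fun i => K (u i)) hu
  refine ⟨finFib_equiv e _ _ H (finFib_prod (fun x : {x // InBox B P x} => K x.1) _
    (finFib_fintype _) hpi.1), ?_⟩
  rw [← gf_equiv e _ _ H, gf_prod (fun x : {x // InBox B P x} => K x.1) _
    (finFib_fintype _) hpi.1, mul_assoc, hpi.2, mul_one, gf_fintype]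
  rw [← Finset.sum_subtype S hS (fun x => (PowerSeries.X : PowerSeries ℚ) ^ K x)]
end box

section alg
open LaurentPolynomial Polynomial

theorem alg_final {ι : Type*} [Fintype ι] [DecidableEq ι] (D P P' : ι → ℚ[X]) (s : ι → ℤ) (d N : ℕ)
    (hD : ∀ i, invert (toLaurent (D i)) = ((-1) ^ d * T (-s i)) * toLaurent (D i))
    (hP : ∀ i, invert (toLaurent (P i)) = T (-s i) * toLaurent (P' i))
    (hR : ∑ i, P i * ∏ j ∈ Finset.univ.erase i, D j = ∑ i, P' i * ∏ j ∈ Finset.univ.erase i, D j)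
    (p q : ℚ[X]) (hq : q = ∏ i, D i)
    (hp : p = (1 - X ^ N) ^ d * ∑ i, P i * ∏ j ∈ Finset.univ.erase i, D j) :
    X ^ (q.natDegree + d * N) * p.reverse * q = X ^ p.natDegree * p * q.reverse := by
  apply toLaurent_injective
  simp only [map_mul, map_pow, toLaurent_reverse, toLaurent_X]
  set R := ∑ i, P i * ∏ j ∈ Finset.univ.erase i, D j with hRdef
  set C : ℚ[T;T⁻¹] := ∏ i, ((-1) ^ d * T (-s i)) with hC
  have hiq : invert (toLaurent q) = C * toLaurent q := by
    rw [hq, map_prod, map_prod, hC, ← Finset.prod_mul_distrib]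
    exact Finset.prod_congr rfl fun i _ => hD i
  have hsq : ((-1 : ℚ[T;T⁻¹]) ^ d) * (-1) ^ d = 1 := by rw [← mul_pow]; simp
  have hiR : invert (toLaurent R) = (-1) ^ d * C * toLaurent R := by
    conv_rhs => rw [hR]
    rw [hRdef, map_sum, map_sum, map_sum, Finset.mul_sum]
    refine Finset.sum_congr rfl fun i _ => ?_
    rw [map_mul, map_mul, map_mul, hP, map_prod, map_prod, hC,
      ← Finset.mul_prod_erase _ _ (Finset.mem_univ i), Finset.prod_congr rfl (fun j _ => hD j),
      Finset.prod_mul_distrib]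
    linear_combination (-T (-s i) * toLaurent (P' i) * (∏ j ∈ Finset.univ.erase i, ((-1) ^ d * T (-s j)))
      * (∏ j ∈ Finset.univ.erase i, toLaurent (D j))) * hsq
  have hiN : invert (toLaurent ((1 - X ^ N : ℚ[X]) ^ d)) * T (d * N : ℕ)  =
      (-1) ^ d * toLaurent ((1 - X ^ N : ℚ[X]) ^ d) := by
    have h1 : invert (toLaurent (1 - X ^ N : ℚ[X])) * T N = (-1) * toLaurent (1 - X ^ N : ℚ[X]) := by
      simp only [map_sub, map_one, map_pow, toLaurent_X, T_pow, invert_T, mul_one]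
      rw [sub_mul, ← T_add]
      simp
    rw [map_pow, map_pow, ← mul_pow, ← h1, mul_pow, T_pow]
    push_cast; rfl
  have hp' : toLaurent p = toLaurent ((1 - X ^ N : ℚ[X]) ^ d) * toLaurent R := by
    rw [hp, map_mul]
  rw [hp', map_mul, hiq, hiR]
  simp only [T_pow, mul_one]
  have hT : (T ((q.natDegree + d * N : ℕ) : ℤ) : ℚ[T;T⁻¹]) = T q.natDegree * T (d * N : ℕ) := by
    rw [← T_add]; push_cast; rfl
  rw [hT]
  linear_combination (T q.natDegree * T p.natDegree * ((-1) ^ d * C * toLaurent R) * toLaurent q) * hiN +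
    (T q.natDegree * T p.natDegree * toLaurent ((1 - X ^ N : ℚ[X]) ^ d) * C * toLaurent R * toLaurent q) * hsq

theorem invert_D {ι : Type*} [Fintype ι] (k : ι → ℕ) (d : ℕ) (hd : Fintype.card ι = d) :
    invert (toLaurent (∏ i, (1 - X ^ k i : ℚ[X]))) =
      ((-1) ^ d * T (-((∑ i, k i : ℕ) : ℤ))) * toLaurent (∏ i, (1 - X ^ k i : ℚ[X])) := by
  have hT : ∀ s : Finset ι, (T (-((∑ i ∈ s, k i : ℕ) : ℤ)) : ℚ[T;T⁻¹]) = ∏ i ∈ s, T (-(k i : ℤ)) := by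
    intro s
    induction s using Finset.induction_on with
    | empty => simp
    | insert a s ha ih => rw [Finset.sum_insert ha, Finset.prod_insert ha, ← ih, ← T_add]; push_cast; congr 1; ring
  rw [hT, ← hd, ← Finset.card_univ, ← Finset.prod_const, ← Finset.prod_mul_distrib, map_prod, map_prod,
    ← Finset.prod_mul_distrib]
  refine Finset.prod_congr rfl fun i _ => ?_
  simp only [map_sub, map_one, map_pow, toLaurent_X, T_pow, invert_T, mul_one]
  have hh : (T (-(k i : ℤ)) : ℚ[T;T⁻¹]) * T (k i : ℤ) = 1 := by rw [← T_add]; simp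
  linear_combination -hh

theorem invert_P {α : Type*} (S S' : Finset α) (K : α → ℕ) (s : ℕ) (f : α → α)
    (h1 : ∀ x ∈ S, f x ∈ S') (h2 : ∀ x ∈ S', f x ∈ S) (hf : ∀ x, f (f x) = x)
    (hK : ∀ x ∈ S, K x + K (f x) = s) :
    invert (toLaurent (∑ x ∈ S, (X ^ K x : ℚ[X]))) =
      T (-(s : ℤ)) * toLaurent (∑ x ∈ S', (X ^ K x : ℚ[X])) := by
  simp only [map_sum, map_pow, toLaurent_X, T_pow, invert_T, mul_one, Finset.mul_sum, ← T_add]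
  refine Finset.sum_bij' (fun x _ => f x) (fun x _ => f x) h1 h2 (fun x _ => hf x) (fun x _ => hf x) ?_
  intro x hx
  have := hK x hx
  congr 1
  omega
end alg

section hahn

theorem natq (N : ℕ) (hN : 0 < N) (g g' : ℕ) : (g : ℚ) / N ≤ (g' : ℚ) / N ↔ g ≤ g' := by
  have : (0 : ℚ) < N := by exact_mod_cast hN
  rw [div_le_div_iff_of_pos_right this]
  exact_mod_cast Iff.rfl

noncomputable def phi (N : ℕ) (hN : 0 < N) : PowerSeries ℚ →+* HahnSeries ℚ ℚ :=
  (HahnSeries.embDomainRingHom (Γ := ℕ) (Γ' := ℚ)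
    ({ toFun := fun n => (n : ℚ) / N, map_zero' := by simp, map_add' := fun a b => by
        push_cast; ring } : ℕ →+ ℚ)
    (fun a b h => le_antisymm ((natq N hN a b).1 (le_of_eq h)) ((natq N hN b a).1 (ge_of_eq h)))
    (natq N hN)).comp (HahnSeries.toPowerSeries (R := ℚ)).symm.toRingHom

theorem phi_coeff (N : ℕ) (hN : 0 < N) (f : PowerSeries ℚ) (n : ℕ) :
    (phi N hN f).coeff ((n : ℚ) / N) = PowerSeries.coeff n f := by
  rw [← HahnSeries.coeff_toPowerSeries_symm]
  exact HahnSeries.embDomain_coeff (f := ⟨⟨fun n : ℕ => (n : ℚ) / N, _⟩, natq N hN _ _⟩)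

theorem phi_coeff' (N : ℕ) (hN : 0 < N) (f : PowerSeries ℚ) (e : ℚ) (he : ∀ n : ℕ, e ≠ (n : ℚ) / N) :
    (phi N hN f).coeff e = 0 := by
  apply HahnSeries.embDomain_of_notMem_range
  rintro ⟨n, rfl⟩
  exact he n rfl

theorem phi_eq (N : ℕ) (hN : 0 < N) (f : PowerSeries ℚ) (H : HahnSeries ℚ ℚ)
    (h1 : ∀ n : ℕ, H.coeff ((n : ℚ) / N) = PowerSeries.coeff n f)
    (h2 : ∀ e, (∀ n : ℕ, e ≠ (n : ℚ) / N) → H.coeff e = 0) : H = phi N hN f := by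
  ext e
  by_cases he : ∃ n : ℕ, e = (n : ℚ) / N
  · obtain ⟨n, rfl⟩ := he
    rw [h1, phi_coeff]
  · push Not at he
    rw [h2 e he, phi_coeff' N hN f e he]

theorem phi_monomial (N : ℕ) (hN : 0 < N) (n : ℕ) (c : ℚ) :
    HahnSeries.single ((n : ℚ) / N) c = phi N hN (PowerSeries.monomial n c) := by
  have hinj : ∀ m : ℕ, (m : ℚ) / N = (n : ℚ) / N ↔ m = n := by
    intro m
    have : (N : ℚ) ≠ 0 := by exact_mod_cast hN.ne'
    rw [div_left_inj' this]; exact_mod_cast Iff.rfl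
  apply phi_eq
  · intro m
    rw [HahnSeries.coeff_single, PowerSeries.coeff_monomial]
    simp only [hinj]
  · intro e he
    exact HahnSeries.coeff_single_of_ne (he n)

theorem phi_poly (N : ℕ) (hN : 0 < N) (p : Polynomial ℚ) :
    polyToHahn N p = phi N hN (p : PowerSeries ℚ) := by
  unfold polyToHahn
  conv_rhs => rw [p.as_sum_range]
  rw [← Polynomial.coeToPowerSeries.ringHom_apply, map_sum, map_sum]
  refine Finset.sum_congr rfl fun k _ => ?_
  rw [phi_monomial N hN, Polynomial.coeToPowerSeries.ringHom_apply, Polynomial.coe_monomial]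

theorem phi_t (N : ℕ) (hN : 0 < N) : tpow 1 = phi N hN (PowerSeries.X ^ N) := by
  have h : (1 : ℚ) = (N : ℚ) / N := by
    have : (N : ℚ) ≠ 0 := by exact_mod_cast hN.ne'
    field_simp
  unfold tpow
  rw [PowerSeries.X_pow_eq, ← phi_monomial N hN, ← h]

theorem phi_mk (N : ℕ) (hN : 0 < N) (c : ℚ → ℚ) (f : PowerSeries ℚ)
    (h1 : ∀ n : ℕ, c ((n : ℚ) / N) = PowerSeries.coeff n f)
    (h2 : ∀ e, (∀ n : ℕ, e ≠ (n : ℚ) / N) → c e = 0) : mkHahn c = phi N hN f := by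
  have hc : c = (phi N hN f).coeff := by
    ext e
    by_cases he : ∃ n : ℕ, e = (n : ℚ) / N
    · obtain ⟨n, rfl⟩ := he
      rw [h1, phi_coeff]
    · push Not at he
      rw [h2 e he, phi_coeff' N hN f e he]
  subst hc
  unfold mkHahn
  exact dif_pos (phi N hN f).isPWO_support'
end hahn

section fan
variable {d r : ℕ} (v : Fin r → Fin d → ℤ) (cones : Finset (Finset (Fin r)))

abbrev MaxC (d : ℕ) {r : ℕ} (cones : Finset (Finset (Fin r))) : Type :=
  {σ : Finset (Fin r) // σ ∈ cones ∧ σ.card = d}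

def spn (σ : Finset (Fin r)) : Submodule ℝ (Fin d → ℝ) :=
  Submodule.span ℝ (Set.range fun i : σ => castv (v i))

def Generic (ξ : Fin d → ℝ) : Prop := ∀ τ ∈ cones, τ.card < d → ξ ∉ spn v τ

theorem exists_generic : ∃ ξ : Fin d → ℝ, Generic v cones ξ := by
  let s : Finset (Subspace ℝ (Fin d → ℝ)) := (cones.filter (fun τ => τ.card < d)).image (spn v)
  have hs : ⊤ ∉ s := by
    intro h
    obtain ⟨τ, hτ, h⟩ := Finset.mem_image.1 h
    have hc := (Finset.mem_filter.1 hτ).2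
    have h1 : Module.finrank ℝ (spn v τ) ≤ Fintype.card τ :=
      finrank_range_le_card (R := ℝ) (fun i : τ => castv (v i))
    rw [h, finrank_top, Module.finrank_fin_fun, Fintype.card_coe] at h1
    omega
  have := Subspace.biUnion_ne_univ_of_top_notMem hs
  obtain ⟨ξ, hξ⟩ := (Set.ne_univ_iff_exists_notMem _).1 this
  refine ⟨ξ, fun τ hτ hc h => hξ ?_⟩
  simp only [Set.mem_iUnion]
  exact ⟨spn v τ, Finset.mem_image.2 ⟨τ, Finset.mem_filter.2 ⟨hτ, hc⟩, rfl⟩, h⟩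

theorem generic_neg {ξ : Fin d → ℝ} (h : Generic v cones ξ) : Generic v cones (-ξ) :=
  fun τ hτ hc h' => h τ hτ hc (by simpa using (spn v τ).neg_mem h')

theorem cone_spn (σ : Finset (Fin r)) (x : Fin d → ℝ) (hx : x ∈ coneOf d r v σ) : x ∈ spn v σ := by
  obtain ⟨c, -, hc, h⟩ := hx
  have : x = ∑ i, c i • castv (v i) := by
    ext j; rw [h]; simp [castv]
  rw [this]
  refine Submodule.sum_mem _ fun i _ => ?_
  by_cases hi : i ∈ σ
  · exact Submodule.smul_mem _ _ (Submodule.subset_span ⟨⟨i, hi⟩, rfl⟩)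
  · rw [hc i hi, zero_smul]; exact Submodule.zero_mem _

theorem exists_basis
    (hindep : ∀ σ ∈ cones, LinearIndependent ℝ (fun i : σ => fun j => (v i j : ℝ)))
    (σ : MaxC d cones) : ∃ B : Module.Basis σ.1 ℝ (Fin d → ℝ), ∀ i, B i = castv (v i) := by
  have h := hindep σ.1 σ.2.1
  refine ⟨Module.Basis.mk h (h.span_eq_top_of_card_eq_finrank' ?_).ge, fun i => ?_⟩
  · rw [Module.finrank_fin_fun, Fintype.card_coe, σ.2.2]
  · rw [Module.Basis.mk_apply]; rfl

variable (B : ∀ σ : MaxC d cones, Module.Basis σ.1 ℝ (Fin d → ℝ))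
  (hB : ∀ σ i, B σ i = castv (v i))
include hB

theorem repr_eq (σ : MaxC d cones) (x : Fin d → ℝ) (c : Fin r → ℝ) (hc : ∀ i ∉ σ.1, c i = 0)
    (h : ∀ j, x j = ∑ i, c i * (v i j : ℝ)) (i : σ.1) : (B σ).repr x i = c i := by
  have : x = ∑ i : σ.1, c i • B σ i := by
    ext j
    rw [h]
    simp only [hB, Finset.sum_apply, Pi.smul_apply, smul_eq_mul, castv]
    rw [Finset.sum_coe_sort σ.1 (fun i => c i * (v i j : ℝ))]
    symm
    apply Finset.sum_subset (Finset.subset_univ _)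
    intro i _ hi
    rw [hc i hi, zero_mul]
  rw [this, (B σ).repr_sum_self]

theorem mem_cone (σ : MaxC d cones) (x : Fin d → ℝ) :
    x ∈ coneOf d r v σ.1 ↔ ∀ i, 0 ≤ (B σ).repr x i := by
  constructor
  · rintro ⟨c, h0, hc, h⟩ i
    rw [repr_eq v cones B hB σ x c hc h]
    exact h0 i
  · intro h
    refine ⟨fun i => if hi : i ∈ σ.1 then (B σ).repr x ⟨i, hi⟩ else 0, ?_, ?_, ?_⟩
    · intro i
      dsimp only
      split_ifs
      · exact h _
      · exact le_rfl
    · intro i hi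
      simp [hi]
    · intro j
      have h1 := congrFun ((B σ).sum_repr x) j
      simp only [hB, Finset.sum_apply, Pi.smul_apply, smul_eq_mul, castv] at h1
      rw [← h1]
      rw [← Finset.sum_subset (Finset.subset_univ σ.1), ← Finset.sum_coe_sort σ.1]
      · refine Finset.sum_congr rfl fun i _ => ?_
        simp
      · intro i _ hi
        simp [hi]

theorem generic_ne (hdown : ∀ σ ∈ cones, ∀ τ ⊆ σ, τ ∈ cones)
    {ξ : Fin d → ℝ} (hξ : Generic v cones ξ) (σ : MaxC d cones) (i : σ.1) :
    (B σ).repr ξ i ≠ 0 := by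
  intro h0
  refine hξ (σ.1.erase i) (hdown σ.1 σ.2.1 _ (Finset.erase_subset _ _)) ?_ ?_
  · have := Finset.card_erase_lt_of_mem i.2
    have := σ.2.2
    omega
  · rw [← (B σ).sum_repr ξ]
    refine Submodule.sum_mem _ fun j _ => ?_
    by_cases hj : j = i
    · subst hj; rw [h0, zero_smul]; exact Submodule.zero_mem _
    · rw [hB]
      refine Submodule.smul_mem _ _ (Submodule.subset_span ⟨⟨j.1, ?_⟩, rfl⟩)
      exact Finset.mem_erase.2 ⟨fun h => hj (Subtype.ext h), j.2⟩

theorem fan_exists (hdown : ∀ σ ∈ cones, ∀ τ ⊆ σ, τ ∈ cones)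
    (hindep : ∀ σ ∈ cones, LinearIndependent ℝ (fun i : σ => fun j => (v i j : ℝ)))
    (hcomplete : ∀ x : Fin d → ℝ, ∃ σ ∈ cones, x ∈ coneOf d r v σ)
    {ξ : Fin d → ℝ} (hξ : Generic v cones ξ) (w : Fin d → ℤ) :
    ∃ σ : MaxC d cones, InH (B σ) (fun i => 0 < (B σ).repr ξ i) w := by
  have hc : ∀ n : ℕ, ∃ σ : {σ // σ ∈ cones},
      castv w + (1 / ((n : ℝ) + 1)) • ξ ∈ coneOf d r v σ.1 := by
    intro n
    obtain ⟨σ, h, h'⟩ := hcomplete (castv w + (1 / ((n : ℝ) + 1)) • ξ)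
    exact ⟨⟨σ, h⟩, h'⟩
  choose s hs using hc
  obtain ⟨σ, hσ⟩ := Finite.exists_infinite_fiber s
  rw [Set.infinite_coe_iff] at hσ
  have hmem : ∀ n, n ∈ s ⁻¹' {σ} → castv w + (1 / ((n : ℝ) + 1)) • ξ ∈ coneOf d r v σ.1 := by
    intro n hn
    have := hs n
    rwa [show s n = σ from hn] at this
  obtain ⟨n, hn⟩ := hσ.nonempty
  obtain ⟨m, hm, hnm⟩ := hσ.exists_gt n
  have hspan : ξ ∈ spn v σ.1 := by
    have h1 := (spn v σ.1).sub_mem (cone_spn v σ.1 _ (hmem n hn)) (cone_spn v σ.1 _ (hmem m hm))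
    rw [add_sub_add_left_eq_sub, ← sub_smul] at h1
    have hne : (1 / ((n : ℝ) + 1) - 1 / ((m : ℝ) + 1)) ≠ 0 := by
      have : 1 / ((m : ℝ) + 1) < 1 / ((n : ℝ) + 1) := by
        apply one_div_lt_one_div_of_lt (by positivity)
        have : (n : ℝ) < m := by exact_mod_cast hnm
        linarith
      linarith
    exact ((spn v σ.1).smul_mem_iff hne).1 h1
  have hcard : σ.1.card = d := by
    have h1 := (hindep σ.1 σ.2).fintype_card_le_finrank
    rw [Module.finrank_fin_fun, Fintype.card_coe] at h1
    by_contra hne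
    exact hξ σ.1 σ.2 (by omega) hspan
  let σ' : MaxC d cones := ⟨σ.1, σ.2, hcard⟩
  refine ⟨σ', fun i => ?_⟩
  have hco : ∀ n, n ∈ s ⁻¹' {σ} → 0 ≤ (B σ').repr (castv w) i + (1 / ((n : ℝ) + 1)) * (B σ').repr ξ i := by
    intro n hn
    have := (mem_cone v cones B hB σ' _).1 (hmem n hn) i
    simpa using this
  have hne := generic_ne v cones B hB hdown hξ σ' i
  constructor
  · intro hP
    by_contra hlt
    push Not at hlt
    obtain ⟨k, hk⟩ := exists_nat_gt ((B σ').repr ξ i / (-(B σ').repr (castv w) i))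
    obtain ⟨m, hm, hkm⟩ := hσ.exists_gt k
    have h1 := hco m hm
    have h2 : (k : ℝ) < m := by exact_mod_cast hkm
    rw [div_lt_iff₀ (by linarith)] at hk
    have hm0 : (0 : ℝ) < (m : ℝ) + 1 := by positivity
    have h3 : 0 ≤ ((m : ℝ) + 1) * (B σ').repr (castv w) i + (B σ').repr ξ i := by
      have := mul_nonneg hm0.le h1
      rw [mul_add, ← mul_assoc, mul_one_div_cancel hm0.ne', one_mul] at this
      exact this
    nlinarith
  · intro hP
    have hneg : (B σ').repr ξ i < 0 := lt_of_le_of_ne (not_lt.1 hP) hne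
    have h1 := hco n hn
    have : (1 / ((n : ℝ) + 1)) * (B σ').repr ξ i < 0 := mul_neg_of_pos_of_neg (by positivity) hneg
    linarith

theorem fan_unique
    (hfan : ∀ σ ∈ cones, ∀ τ ∈ cones,
      coneOf d r v σ ∩ coneOf d r v τ = coneOf d r v (σ ∩ τ))
    {ξ : Fin d → ℝ} (w : Fin d → ℤ) (σ τ : MaxC d cones)
    (hσ : InH (B σ) (fun i => 0 < (B σ).repr ξ i) w)
    (hτ : InH (B τ) (fun i => 0 < (B τ).repr ξ i) w) : σ = τ := by
  have hev : ∀ ρ : MaxC d cones, InH (B ρ) (fun i => 0 < (B ρ).repr ξ i) w →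
      ∀ᶠ ε in nhdsWithin (0 : ℝ) (Set.Ioi 0), ∀ i, 0 < (B ρ).repr (castv w + ε • ξ) i := by
    intro ρ hρ
    rw [Filter.eventually_all]
    intro i
    simp only [map_add, map_smul, Finsupp.add_apply, Finsupp.smul_apply, smul_eq_mul]
    by_cases hP : 0 < (B ρ).repr ξ i
    · filter_upwards [self_mem_nhdsWithin] with ε hε
      have := (hρ i).1 hP
      have := mul_pos (Set.mem_Ioi.1 hε) hP
      linarith
    · have h0 := (hρ i).2 hP
      have hcont : Continuous fun ε : ℝ => (B ρ).repr (castv w) i + ε * (B ρ).repr ξ i := by fun_prop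
      have := hcont.tendsto 0
      simp only [zero_mul, add_zero] at this
      exact (this.mono_left nhdsWithin_le_nhds).eventually_const_lt h0
  obtain ⟨ε, h1, h2⟩ := ((hev σ hσ).and (hev τ hτ)).exists
  have hx : castv w + ε • ξ ∈ coneOf d r v (σ.1 ∩ τ.1) := by
    rw [← hfan σ.1 σ.2.1 τ.1 τ.2.1]
    exact ⟨(mem_cone v cones B hB σ _).2 fun i => (h1 i).le,
      (mem_cone v cones B hB τ _).2 fun i => (h2 i).le⟩
  obtain ⟨c, -, hc, h⟩ := hx
  have hsub : ∀ ρ : MaxC d cones, σ.1 ∩ τ.1 ⊆ ρ.1 →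
      (∀ i, 0 < (B ρ).repr (castv w + ε • ξ) i) → ρ.1 ⊆ σ.1 ∩ τ.1 := by
    intro ρ hρ hpos i hi
    by_contra hn
    have h3 := repr_eq v cones B hB ρ _ c (fun i hi => hc i fun h => hi (hρ h)) h ⟨i, hi⟩
    have h4 := hpos ⟨i, hi⟩
    rw [h3, hc i hn] at h4
    exact lt_irrefl _ h4
  apply Subtype.ext
  apply Finset.Subset.antisymm
  · exact (hsub σ Finset.inter_subset_left h1).trans Finset.inter_subset_right
  · exact (hsub τ Finset.inter_subset_right h2).trans Finset.inter_subset_left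

end fan

section mainpart
variable {d r : ℕ}

theorem delta_card (v : Fin r → Fin d → ℤ)
    (cones : Finset (Finset (Fin r))) (ψ lam : (Fin d → ℝ) → ℝ)
    (hcomplete : ∀ x : Fin d → ℝ, ∃ σ ∈ cones, x ∈ coneOf d r v σ)
    (hψ0 : ∀ w : Fin d → ℤ, 0 ≤ ψ (castv w))
    (hψz : ∀ w : Fin d → ℤ, ψ (castv w) = 0 → w = 0)
    (hz : ψ (castv 0) = 0) (hlz : lam (castv 0) = 0)
    (N : ℕ) (hN : 0 < N) (K : (Fin d → ℤ) → ℕ)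
    (hK : ∀ w, (K w : ℝ) = N * (ψ (castv w) + lam (castv w))) (e : ℚ)
    (hfin : {p : ℕ × (Fin d → ℤ) | (p.1 * N + K p.2 : ℚ) = e * N}.Finite) :
    deltaCoeff d r v cones ψ lam e =
      ({p : ℕ × (Fin d → ℤ) | (p.1 * N + K p.2 : ℚ) = e * N}.ncard : ℚ) := by
  have hN' : (0 : ℝ) < N := by exact_mod_cast hN
  set f : ℕ × (Fin d → ℤ) → ℕ × (Fin d → ℤ) := fun p => (p.1 + ⌈ψ (castv p.2)⌉₊, p.2) with hf
  have hfi : Function.Injective f := by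
    rintro ⟨a, w⟩ ⟨b, w'⟩ h
    simp only [hf, Prod.mk.injEq] at h
    obtain ⟨h1, rfl⟩ := h
    simp only [Prod.mk.injEq, and_true]
    omega
  rw [← Set.ncard_image_of_injective _ hfi]
  have hceil : ∀ w : Fin d → ℤ, ((⌈ψ (castv w)⌉₊ : ℕ) : ℝ) = (⌈ψ (castv w)⌉ : ℝ) :=
    fun w => natCast_ceil_eq_intCast_ceil (hψ0 w)
  have himg : f '' {p : ℕ × (Fin d → ℤ) | (p.1 * N + K p.2 : ℚ) = e * N} =
      {p : ℕ × (Fin d → ℤ) | ψ (castv p.2) ≤ (p.1 : ℝ) ∧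
        ψ (castv p.2) - ⌈ψ (castv p.2)⌉ + lam (castv p.2) + (p.1 : ℝ) = (e : ℝ)} := by
    ext ⟨m, w⟩
    have heq : ∀ k : ℕ, ((k * N + K w : ℚ) = e * N) ↔
        (k : ℝ) + ψ (castv w) + lam (castv w) = (e : ℝ) := by
      intro k
      rw [← Rat.cast_inj (α := ℝ)]
      push_cast
      rw [hK]
      constructor
      · intro h
        have : (N : ℝ) * ((k : ℝ) + ψ (castv w) + lam (castv w)) = N * e := by linarith
        exact mul_left_cancel₀ hN'.ne' this
      · intro h
        rw [← h]; ring
    constructor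
    · rintro ⟨⟨k, w'⟩, hk, h⟩
      simp only [hf, Prod.mk.injEq] at h
      obtain ⟨rfl, rfl⟩ := h
      have hk' := (heq k).1 hk
      have h1 := Nat.le_ceil (ψ (castv w'))
      refine ⟨?_, ?_⟩
      · push_cast
        have : (0 : ℝ) ≤ k := by positivity
        linarith
      · dsimp only
        push_cast
        rw [hceil]; linarith
    · rintro ⟨h1, h2⟩
      dsimp only at h1 h2
      have h3 : ⌈ψ (castv w)⌉₊ ≤ m := Nat.ceil_le.2 h1
      refine ⟨(m - ⌈ψ (castv w)⌉₊, w), ?_, ?_⟩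
      · refine (heq _).2 ?_
        rw [Nat.cast_sub h3, hceil]
        linarith
      · simp only [hf]
        rw [Nat.sub_add_cancel h3]
  have hUfin := hfin.image f
  rw [himg] at hUfin ⊢
  set U := {p : ℕ × (Fin d → ℤ) | ψ (castv p.2) ≤ (p.1 : ℝ) ∧
        ψ (castv p.2) - ⌈ψ (castv p.2)⌉ + lam (castv p.2) + (p.1 : ℝ) = (e : ℝ)} with hU
  unfold deltaCoeff
  have hS : {p : ℕ × (Fin d → ℤ) |
    1 ≤ p.1 ∧ (∃ σ ∈ cones, (fun j => (p.2 j : ℝ)) ∈ coneOf d r v σ) ∧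
    ψ (fun j => (p.2 j : ℝ)) ≤ (p.1 : ℝ) ∧
    ψ (fun j => (p.2 j : ℝ)) - ⌈ψ (fun j => (p.2 j : ℝ))⌉
      + lam (fun j => (p.2 j : ℝ)) + (p.1 : ℝ) = (e : ℝ)} = U \ {(0, 0)} := by
    ext ⟨m, w⟩
    constructor
    · rintro ⟨h1, -, h2, h3⟩
      refine ⟨⟨h2, h3⟩, ?_⟩
      intro h
      have : m = 0 := congrArg Prod.fst h
      simp only at h1
      omega
    · rintro ⟨⟨h2, h3⟩, h1⟩
      refine ⟨?_, hcomplete _, h2, h3⟩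
      by_contra hm
      have hm0 : m = 0 := by simp only at hm; omega
      subst hm0
      simp only [Nat.cast_zero] at h2
      have := hψz w (le_antisymm h2 (hψ0 w))
      subst this
      exact h1 rfl
  rw [hS]
  by_cases he : e = 0
  · have hmem : ((0, 0) : ℕ × (Fin d → ℤ)) ∈ U := by
      refine ⟨?_, ?_⟩ <;> simp [hz, hlz, he]
    rw [if_pos he]
    have := Set.ncard_sdiff_singleton_add_one hmem hUfin
    rw [← this]; push_cast; ring
  · rw [if_neg he, zero_add, Set.sdiff_singleton_eq_self]
    rintro ⟨-, h⟩
    apply he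
    simp only [hz, hlz] at h
    have : (e : ℝ) = 0 := by rw [← h]; simp
    exact_mod_cast this

theorem fan_gf (v : Fin r → Fin d → ℤ) (cones : Finset (Finset (Fin r)))
    (B : ∀ σ : MaxC d cones, Module.Basis σ.1 ℝ (Fin d → ℝ))
    (hB : ∀ σ i, B σ i = castv (v i)) (P : ∀ σ : MaxC d cones, σ.1 → Prop)
    (hP : ∀ w, ∃ σ, InH (B σ) (P σ) w)
    (hP' : ∀ w σ τ, InH (B σ) (P σ) w → InH (B τ) (P τ) w → σ = τ)
    (K : (Fin d → ℤ) → ℕ) (L : MaxC d cones → (Fin d → ℝ) →ₗ[ℝ] ℝ)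
    (hK : ∀ σ w, (∀ i, 0 ≤ (B σ).repr (castv w) i) → (K w : ℝ) = L σ (castv w))
    (hu : ∀ (σ : MaxC d cones) (i : σ.1), 0 < K (v i)) (S : MaxC d cones → Finset (Fin d → ℤ))
    (hS : ∀ σ x, x ∈ S σ ↔ InBox (B σ) (P σ) x) :
    FinFib K ∧ gf K * ∏ σ : MaxC d cones, ∏ i : σ.1, (1 - PowerSeries.X ^ K (v i)) =
      ∑ σ, (∑ x ∈ S σ, PowerSeries.X ^ K x) *
        ∏ τ ∈ Finset.univ.erase σ, ∏ i : τ.1, (1 - PowerSeries.X ^ K (v i)) := by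
  have hc := fun σ : MaxC d cones =>
    cone_gf (B σ) (fun i : σ.1 => v i) (hB σ) (P σ) K (L σ) (hK σ) (hu σ) (S σ) (hS σ)
  let f : (Σ σ : MaxC d cones, {w // InH (B σ) (P σ) w}) → (Fin d → ℤ) := fun p => p.2.1
  have hf : Function.Bijective f := by
    constructor
    · rintro ⟨σ, w, hw⟩ ⟨τ, w', hw'⟩ h
      change w = w' at h
      subst h
      have := hP' w σ τ hw hw'
      subst this
      rfl
    · intro w
      obtain ⟨σ, h⟩ := hP w
      exact ⟨⟨σ, w, h⟩, rfl⟩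
  have H : ∀ p : (Σ σ : MaxC d cones, {w // InH (B σ) (P σ) w}),
      K p.2.1 = K (Equiv.ofBijective f hf p) := fun p => rfl
  refine ⟨finFib_equiv (Equiv.ofBijective f hf) _ _ H
    (finFib_sigma (fun σ (w : {w // InH (B σ) (P σ) w}) => K w.1) fun σ => (hc σ).1), ?_⟩
  rw [← gf_equiv (Equiv.ofBijective f hf) _ _ H,
    gf_sigma (fun σ (w : {w // InH (B σ) (P σ) w}) => K w.1) fun σ => (hc σ).1, Finset.sum_mul]
  refine Finset.sum_congr rfl fun σ _ => ?_
  rw [← (hc σ).2, mul_assoc, Finset.mul_prod_erase _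
    (fun σ : MaxC d cones => ∏ i : σ.1, ((1 : PowerSeries ℚ) - PowerSeries.X ^ K (v i)))
    (Finset.mem_univ σ)]
end mainpart

set_option maxHeartbeats 1000000 in
/-- For a complete simplicial rational fan `Σ` and `λ` piecewise `ℚ`-linear
with `λ(b_i) > -1`, the weighted δ-vector
`δ^λ(t) = (1-t)^{d+1}(1 + ∑_{m≥1} ∑_{v ∈ mQ∩N} t^{ψ(v)-⌈ψ(v)⌉+λ(v)+m})` is a rational
function in `ℚ(t^{1/N})` for some `N > 0` (i.e. `δ^λ = p(t^{1/N})/q(t^{1/N})`), and satisfies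
the symmetry `δ^λ(t) = t^d δ^λ(t⁻¹)` (expressed in terms of reversed polynomials). -/
theorem stmt_8 (d r : ℕ) (v : Fin r → Fin d → ℤ)
    (cones : Finset (Finset (Fin r)))
    (hdown : ∀ σ ∈ cones, ∀ τ ⊆ σ, τ ∈ cones)
    (hindep : ∀ σ ∈ cones, LinearIndependent ℝ (fun i : σ => fun j => (v i j : ℝ)))
    (hfan : ∀ σ ∈ cones, ∀ τ ∈ cones,
      coneOf d r v σ ∩ coneOf d r v τ = coneOf d r v (σ ∩ τ))
    (hcomplete : ∀ x : Fin d → ℝ, ∃ σ ∈ cones, x ∈ coneOf d r v σ)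
    (hprim : ∀ i, Finset.univ.gcd (v i) = 1)
    (a : Fin r → ℕ) (ha : ∀ i, 0 < a i)
    (ψ lam : (Fin d → ℝ) → ℝ)
    (hψlin : ∀ σ ∈ cones, ∃ ℓ : (Fin d → ℝ) →ₗ[ℝ] ℝ, ∀ x ∈ coneOf d r v σ, ψ x = ℓ x)
    (hψb : ∀ i, ψ (fun j => (a i : ℝ) * (v i j : ℝ)) = 1)
    (hlamlin : ∀ σ ∈ cones, ∃ ℓ : (Fin d → ℝ) →ₗ[ℝ] ℝ, ∀ x ∈ coneOf d r v σ, lam x = ℓ x)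
    (hlamb : ∀ i, -1 < lam (fun j => (a i : ℝ) * (v i j : ℝ)))
    -- `ψ` and `λ` take rational values on lattice points
    (hrat : ∀ w : Fin d → ℤ, ∃ c : ℚ,
      ψ (fun j => (w j : ℝ)) + lam (fun j => (w j : ℝ)) = (c : ℝ)) :
    ∃ (N : ℕ) (p q : Polynomial ℚ), 0 < N ∧ q ≠ 0 ∧
      polyToHahn N q * ((1 - tpow 1) ^ (d + 1) * mkHahn (deltaCoeff d r v cones ψ lam))
        = polyToHahn N p ∧
      Polynomial.X ^ (q.natDegree + d * N) * p.reverse * q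
        = Polynomial.X ^ p.natDegree * p * q.reverse := by

  choose B hB using exists_basis v cones hindep
  obtain ⟨ξ, hξ⟩ := exists_generic v cones
  have hξ' := generic_neg v cones hξ
  choose ℓψ hℓψ using fun σ : MaxC d cones => hψlin σ.1 σ.2.1
  choose ℓl hℓl using fun σ : MaxC d cones => hlamlin σ.1 σ.2.1
  choose c hc using hrat
  have hc' : ∀ w, ψ (castv w) + lam (castv w) = (c w : ℝ) := hc
  have hcpos := mem_cone v cones B hB
  have hψL : ∀ (σ : MaxC d cones) x, (∀ i, 0 ≤ (B σ).repr x i) → ψ x = ℓψ σ x :=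
    fun σ x h => hℓψ σ x ((hcpos σ x).2 h)
  have hlL : ∀ (σ : MaxC d cones) x, (∀ i, 0 ≤ (B σ).repr x i) → lam x = ℓl σ x :=
    fun σ x h => hℓl σ x ((hcpos σ x).2 h)
  have hone : ∀ (σ : MaxC d cones) (i : σ.1), ∀ k, 0 ≤ (B σ).repr (castv (v i)) k := by
    intro σ i k
    rw [← hB, (B σ).repr_self, Finsupp.single_apply]
    split_ifs <;> norm_num
  have hai : ∀ (σ : MaxC d cones) (i : σ.1), ∀ k,
      0 ≤ (B σ).repr ((a i : ℝ) • castv (v i)) k := by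
    intro σ i k
    rw [map_smul, Finsupp.smul_apply, smul_eq_mul]
    exact mul_nonneg (by positivity) (hone σ i k)
  have hapos : ∀ i, (0 : ℝ) < a i := fun i => by exact_mod_cast ha i
  have hψv : ∀ (σ : MaxC d cones) (i : σ.1), 0 < ℓψ σ (castv (v i)) := by
    intro σ i
    have h1 : ψ ((a i : ℝ) • castv (v i)) = 1 := hψb i
    rw [hψL σ _ (hai σ i), map_smul, smul_eq_mul] at h1
    by_contra h
    push Not at h
    have := mul_nonpos_of_nonneg_of_nonpos (hapos i).le h
    linarith
  have hκv : ∀ (σ : MaxC d cones) (i : σ.1), 0 < (ℓψ σ + ℓl σ) (castv (v i)) := by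
    intro σ i
    have h1 : ψ ((a i : ℝ) • castv (v i)) = 1 := hψb i
    have h2 : -1 < lam ((a i : ℝ) • castv (v i)) := hlamb i
    rw [hψL σ _ (hai σ i)] at h1
    rw [hlL σ _ (hai σ i)] at h2
    have h3 : 0 < (ℓψ σ + ℓl σ) ((a i : ℝ) • castv (v i)) := by
      rw [LinearMap.add_apply]; linarith
    rw [map_smul, smul_eq_mul] at h3
    by_contra h
    push Not at h
    have := mul_nonpos_of_nonneg_of_nonpos (hapos i).le h
    linarith
  have hexp : ∀ (σ : MaxC d cones) (ℓ : (Fin d → ℝ) →ₗ[ℝ] ℝ) x,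
      ℓ x = ∑ i, (B σ).repr x i * ℓ (castv (v i)) := by
    intro σ ℓ x
    conv_lhs => rw [← (B σ).sum_repr x]
    rw [map_sum]
    refine Finset.sum_congr rfl fun i _ => ?_
    rw [map_smul, hB, smul_eq_mul]
  have hHnn : ∀ (σ : MaxC d cones) (P : σ.1 → Prop) w, InH (B σ) P w →
      ∀ i, 0 ≤ (B σ).repr (castv w) i := by
    intro σ P w hw i
    by_cases hP : P i
    · exact (hw i).1 hP
    · exact ((hw i).2 hP).le
  have hBnn : ∀ (σ : MaxC d cones) (P : σ.1 → Prop) w, InBox (B σ) P w →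
      ∀ i, 0 ≤ (B σ).repr (castv w) i := by
    intro σ P w hw i
    by_cases hP : P i
    · exact ((hw i).1 hP).1
    · exact ((hw i).2 hP).1.le
  have hex : ∀ w : Fin d → ℤ, ∃ σ : MaxC d cones, ∀ i, 0 ≤ (B σ).repr (castv w) i := by
    intro w
    obtain ⟨σ, h⟩ := fan_exists v cones B hB hdown hindep hcomplete hξ w
    exact ⟨σ, hHnn σ _ w h⟩
  have hψ0 : ∀ w : Fin d → ℤ, 0 ≤ ψ (castv w) := by
    intro w
    obtain ⟨σ, h⟩ := hex w
    rw [hψL σ _ h, hexp σ]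
    exact Finset.sum_nonneg fun i _ => mul_nonneg (h i) (hψv σ i).le
  have hψz : ∀ w : Fin d → ℤ, ψ (castv w) = 0 → w = 0 := by
    intro w hw
    obtain ⟨σ, h⟩ := hex w
    rw [hψL σ _ h, hexp σ, Finset.sum_eq_zero_iff_of_nonneg
      (fun i _ => mul_nonneg (h i) (hψv σ i).le)] at hw
    have h0 : (B σ).repr (castv w) = 0 := by
      ext i
      have := hw i (Finset.mem_univ i)
      rcases mul_eq_zero.1 this with h1 | h1
      · exact h1
      · exact absurd h1 (hψv σ i).ne'
    have h1 : castv w = 0 := by simpa using h0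
    apply castv_injective
    rw [h1]; ext j; simp [castv]
  have hcast0 : castv (0 : Fin d → ℤ) = 0 := by ext j; simp [castv]
  have hz : ψ (castv 0) = 0 := by
    obtain ⟨σ, h⟩ := hex 0
    rw [hψL σ _ h, hcast0, map_zero]
  have hlz : lam (castv 0) = 0 := by
    obtain ⟨σ, h⟩ := hex 0
    rw [hlL σ _ h, hcast0, map_zero]
  have hκ : ∀ (σ : MaxC d cones) (w : Fin d → ℤ), (∀ i, 0 ≤ (B σ).repr (castv w) i) →
      (c w : ℝ) = (ℓψ σ + ℓl σ) (castv w) := by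
    intro σ w h
    rw [← hc', hψL σ _ h, hlL σ _ h, LinearMap.add_apply]
  have hcnn : ∀ w, (0 : ℝ) ≤ (c w : ℝ) := by
    intro w
    obtain ⟨σ, h⟩ := hex w
    rw [hκ σ w h, hexp σ]
    exact Finset.sum_nonneg fun i _ => mul_nonneg (h i) (hκv σ i).le
  -- the common denominator
  let E : Finset (Fin d → ℤ) := (Finset.univ.biUnion fun σ : MaxC d cones =>
    (box_finite (B σ) (fun i : σ.1 => v i) (hB σ) (fun _ => True)).toFinset) ∪
      Finset.univ.image v
  let N : ℕ := ∏ x ∈ E, (c x).den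
  have hN : 0 < N := Finset.prod_pos fun x _ => (c x).den_pos
  have hNE : ∀ x ∈ E, ∃ z : ℤ, (N : ℝ) * c x = z := by
    intro x hx
    obtain ⟨k, hk⟩ := Finset.dvd_prod_of_mem (fun x => (c x).den) hx
    refine ⟨k * (c x).num, ?_⟩
    have h1 : (N : ℚ) * c x = ((k * (c x).num : ℤ) : ℚ) := by
      have h2 : (N : ℚ) = (c x).den * k := by exact_mod_cast hk
      rw [h2]
      push_cast
      rw [← Rat.mul_den_eq_num]; ring
    exact_mod_cast congrArg (fun q : ℚ => (q : ℝ)) h1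
  have hKex : ∀ w, ∃ n : ℕ, (n : ℝ) = N * c w := by
    intro w
    obtain ⟨σ, h⟩ := hex w
    obtain ⟨e, he⟩ := box_decomp (B σ) (fun i : σ.1 => v i) (hB σ) (fun _ => True)
    obtain ⟨⟨⟨x, hx⟩, n⟩, hxn⟩ := e.surjective ⟨w, fun i => ⟨fun _ => h i, fun h => absurd trivial h⟩⟩
    have h1 := he (⟨x, hx⟩, n)
    rw [hxn] at h1
    simp only at h1
    have hxE : x ∈ E := Finset.mem_union_left _ (Finset.mem_biUnion.2 ⟨σ, Finset.mem_univ _, by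
      simpa using hx⟩)
    obtain ⟨z, hz⟩ := hNE x hxE
    have hv : ∀ i : σ.1, ∃ z : ℤ, (N : ℝ) * (ℓψ σ + ℓl σ) (castv (v i)) = z := by
      intro i
      rw [← hκ σ _ (hone σ i)]
      exact hNE _ (Finset.mem_union_right _ (Finset.mem_image_of_mem _ (Finset.mem_univ _)))
    choose y hy using hv
    have hint : (N : ℝ) * c w = ((z + ∑ i, (n i : ℤ) * y i : ℤ) : ℝ) := by
      rw [hκ σ w h, h1, castv_add, castv_sum (fun i : σ.1 => v i) (fun i => (n i : ℤ)), map_add,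
        ← hκ σ x (hBnn σ _ x hx), map_sum, mul_add, hz, Finset.mul_sum]
      push_cast
      congr 1
      refine Finset.sum_congr rfl fun i _ => ?_
      rw [map_smul, smul_eq_mul, ← hy]
      ring
    have hnn : 0 ≤ z + ∑ i, (n i : ℤ) * y i := by
      have : (0 : ℝ) ≤ ((z + ∑ i, (n i : ℤ) * y i : ℤ) : ℝ) := by
        rw [← hint]; exact mul_nonneg (by positivity) (hcnn w)
      exact_mod_cast this
    refine ⟨(z + ∑ i, (n i : ℤ) * y i).toNat, ?_⟩
    rw [hint, ← Int.cast_natCast, Int.toNat_of_nonneg hnn]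
  choose K hK using hKex
  have hNr : (0 : ℝ) < N := by exact_mod_cast hN
  have hKL : ∀ (σ : MaxC d cones) w, (∀ i, 0 ≤ (B σ).repr (castv w) i) →
      (K w : ℝ) = ((N : ℝ) • (ℓψ σ + ℓl σ)) (castv w) := by
    intro σ w h
    rw [hK, hκ σ w h, LinearMap.smul_apply, smul_eq_mul]
  have hu : ∀ (σ : MaxC d cones) (i : σ.1), 0 < K (v i) := by
    intro σ i
    have : (0 : ℝ) < K (v i) := by
      rw [hK, hκ σ _ (hone σ i)]
      exact mul_pos hNr (hκv σ i)
    exact_mod_cast this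
  let P : ∀ σ : MaxC d cones, σ.1 → Prop := fun σ i => 0 < (B σ).repr ξ i
  let P' : ∀ σ : MaxC d cones, σ.1 → Prop := fun σ i => 0 < (B σ).repr (-ξ) i
  have hPP : ∀ σ i, P' σ i ↔ ¬ P σ i := by
    intro σ i
    have := generic_ne v cones B hB hdown hξ σ i
    simp only [P, P', map_neg, Finsupp.neg_apply, not_lt, Left.neg_pos_iff]
    exact ⟨le_of_lt, fun h => lt_of_le_of_ne h this⟩
  have hPP' : ∀ σ i, P σ i ↔ ¬ P' σ i := fun σ i => by rw [hPP, not_not]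
  let S : MaxC d cones → Finset (Fin d → ℤ) := fun σ =>
    (box_finite (B σ) (fun i : σ.1 => v i) (hB σ) (P σ)).toFinset
  let S' : MaxC d cones → Finset (Fin d → ℤ) := fun σ =>
    (box_finite (B σ) (fun i : σ.1 => v i) (hB σ) (P' σ)).toFinset
  have hS : ∀ σ x, x ∈ S σ ↔ InBox (B σ) (P σ) x := fun σ x => by simp [S]
  have hS' : ∀ σ x, x ∈ S' σ ↔ InBox (B σ) (P' σ) x := fun σ x => by simp [S']
  obtain ⟨hfib, hgf⟩ := fan_gf v cones B hB P
    (fan_exists v cones B hB hdown hindep hcomplete hξ)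
    (fan_unique v cones B hB hfan) K _ hKL hu S hS
  obtain ⟨-, hgf'⟩ := fan_gf v cones B hB P'
    (fan_exists v cones B hB hdown hindep hcomplete hξ')
    (fan_unique v cones B hB hfan) K _ hKL hu S' hS'
  let D : MaxC d cones → Polynomial ℚ := fun σ => ∏ i : σ.1, (1 - Polynomial.X ^ K (v i))
  let Q : MaxC d cones → Polynomial ℚ := fun σ => ∑ x ∈ S σ, Polynomial.X ^ K x
  let Q' : MaxC d cones → Polynomial ℚ := fun σ => ∑ x ∈ S' σ, Polynomial.X ^ K x
  have hcD : ((∏ σ, D σ : Polynomial ℚ) : PowerSeries ℚ) =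
      ∏ σ : MaxC d cones, ∏ i : σ.1, (1 - PowerSeries.X ^ K (v i)) := by
    simp only [D, ← Polynomial.coeToPowerSeries.ringHom_apply, map_prod, map_sub, map_one, map_pow]
    simp
  have hcR : ∀ T : MaxC d cones → Finset (Fin d → ℤ),
      ((∑ σ, (∑ x ∈ T σ, Polynomial.X ^ K x) * ∏ τ ∈ Finset.univ.erase σ, D τ :
        Polynomial ℚ) : PowerSeries ℚ) =
      ∑ σ, (∑ x ∈ T σ, PowerSeries.X ^ K x) *
        ∏ τ ∈ Finset.univ.erase σ, ∏ i : τ.1, (1 - PowerSeries.X ^ K (v i)) := by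
    intro T
    simp only [D, ← Polynomial.coeToPowerSeries.ringHom_apply, map_prod, map_sub, map_one, map_pow,
      map_sum, map_mul]
    simp
  have hR : ∑ σ, Q σ * ∏ τ ∈ Finset.univ.erase σ, D τ =
      ∑ σ, Q' σ * ∏ τ ∈ Finset.univ.erase σ, D τ := by
    apply Polynomial.coe_injective
    rw [hcR S, hcR S', ← hgf, ← hgf']
  refine ⟨N, (1 - Polynomial.X ^ N) ^ d * ∑ σ, Q σ * ∏ τ ∈ Finset.univ.erase σ, D τ,
    ∏ σ, D σ, hN, ?_, ?_, ?_⟩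
  · rw [Finset.prod_ne_zero_iff]
    intro σ _
    simp only [D]
    rw [Finset.prod_ne_zero_iff]
    intro i _ h0
    have := congrArg (Polynomial.eval 0) h0
    simp [(hu σ i).ne'] at this
  · let g : ℕ × (Fin d → ℤ) → ℕ := fun p => p.1 * N + K p.2
    have hgfib : FinFib g := finFib_prod (fun n : ℕ => n * N) K (finFib_mul N hN) hfib
    have hgg : gf g = gf (fun n : ℕ => n * N) * gf K :=
      gf_prod (fun n : ℕ => n * N) K (finFib_mul N hN) hfib
    have hNq : (N : ℚ) ≠ 0 := by exact_mod_cast hN.ne'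
    have hset : ∀ n : ℕ, {p : ℕ × (Fin d → ℤ) | (p.1 * N + K p.2 : ℚ) = (n : ℚ) / N * N} =
        {p | g p = n} := by
      intro n
      ext p
      simp only [Set.mem_ofPred_eq, g]
      rw [div_mul_cancel₀ _ hNq]
      exact_mod_cast Iff.rfl
    have hset' : ∀ e : ℚ, (∀ n : ℕ, e ≠ (n : ℚ) / N) →
        {p : ℕ × (Fin d → ℤ) | (p.1 * N + K p.2 : ℚ) = e * N} = ∅ := by
      intro e he
      ext p
      simp only [Set.mem_ofPred_eq, Set.mem_empty_iff_false, iff_false]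
      intro h
      apply he (p.1 * N + K p.2)
      rw [eq_div_iff hNq]
      push_cast
      exact h.symm
    have hKc : ∀ w, (K w : ℝ) = N * (ψ (castv w) + lam (castv w)) := by
      intro w; rw [hK, hc']
    have hdel : mkHahn (deltaCoeff d r v cones ψ lam) = phi N hN (gf g) := by
      apply phi_mk
      · intro n
        have hfin : {p | g p = n}.Finite := Set.finite_coe_iff.1 (hgfib n)
        rw [delta_card v cones ψ lam hcomplete hψ0 hψz hz hlz N hN K hKc _
          (by rw [hset]; exact hfin), hset, gf, PowerSeries.coeff_mk]
        rfl
      · intro e he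
        rw [delta_card v cones ψ lam hcomplete hψ0 hψz hz hlz N hN K hKc _
          (by rw [hset' e he]; exact Set.finite_empty), hset' e he]
        simp
    rw [hdel, phi_poly N hN, phi_poly N hN, phi_t N hN, ← map_one (phi N hN), ← map_sub, ← map_pow,
      ← map_mul, ← map_mul]
    congr 1
    rw [hgg, Polynomial.coe_mul, Polynomial.coe_pow, Polynomial.coe_sub, Polynomial.coe_one,
      Polynomial.coe_pow, Polynomial.coe_X, hcR S, ← hgf, hcD]
    have := gf_mul N hN
    rw [pow_succ]
    linear_combination ((∏ σ : MaxC d cones, ∏ i : σ.1, (1 - PowerSeries.X ^ K (v i))) *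
      (1 - PowerSeries.X ^ N) ^ d * gf K) * this
  · refine alg_final D Q Q' (fun σ => ((∑ i : σ.1, K (v i) : ℕ) : ℤ)) d N ?_ ?_ hR _ _ rfl rfl
    · intro σ
      exact invert_D (fun i : σ.1 => K (v i)) d (by rw [Fintype.card_coe, σ.2.2])
    · intro σ
      refine invert_P (S σ) (S' σ) K _ (fun x => ∑ i : σ.1, v i - x) ?_ ?_ ?_ ?_
      · intro x hx
        exact (hS' σ _).2 (box_compl (B σ) _ (hB σ) _ _ (hPP σ) x ((hS σ x).1 hx))
      · intro x hx
        exact (hS σ _).2 (box_compl (B σ) _ (hB σ) _ _ (hPP' σ) x ((hS' σ x).1 hx))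
      · intro x; simp
      · intro x hx
        have hx1 := (hS σ x).1 hx
        have hx2 := box_compl (B σ) _ (hB σ) _ _ (hPP σ) x hx1
        have h1 := hKL σ x (hBnn σ _ x hx1)
        have h2 := hKL σ _ (hBnn σ _ _ hx2)
        have h3 := castv_sum (fun i : σ.1 => v i) (fun _ => 1)
        simp only [one_smul, Int.cast_one] at h3
        rw [castv_sub, map_sub, h3, map_sum, ← h1] at h2
        have h4 : ((K x + K (∑ i : σ.1, v i - x) : ℕ) : ℝ) = ((∑ i : σ.1, K (v i) : ℕ) : ℝ) := by
          push_cast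
          rw [h2]
          rw [add_sub_cancel]
          exact Finset.sum_congr rfl fun i _ => (hKL σ _ (hone σ i)).symm
        exact_mod_cast h4
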